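/- (Directed interval Newton theorem.) Let m > k, let F : ℝ^m → ℝ^k be C¹, let p* ∈ ℝ^m, let A_1 be an m×(m−k) real matrix and A_2 an m×k real matrix. Let X ⊂ ℝ^{m−k} and Y ⊂ ℝ^k be compact boxes (products of closed intervals), and let x_0 ∈ X, y_0 ∈ Y. Define S_{X,y_0} = {p* + A_1 x + A_2 y_0 : x ∈ X} and S_{X,Y} = {p* + A_1 x + A_2 y : x ∈ X, y ∈ Y}. Assume: (i) for every matrix M ∈ [DF(S_{X,Y})], the k×k matrix M A_2 is invertible; (ii) for every x ∈ X, every M ∈ [DF(S_{X,Y})] and every M' ∈ [DF(S_{X,y_0})], the point y_0 − (M A_2)^{-1} ( F(p* + A_1 x_0 + A_2 y_0) + M' A_1 (x − x_0) ) lies in Y. Then there exists a function q : X → Y such that F(p* + A_1 x + A_2 q(x)) = 0 for all x ∈ X; moreover q is as smooth as F (in particular C¹). -/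

import Mathlib

open Set Matrix

/-!
For fixed `x ∈ X` put `G y = F (p* + A₁ x + A₂ y)`. The mean value theorem, applied row by row,
turns the hypothesis on the Newton image into: from every `y ∈ Y` the derivative of `G` takes the
value `-G y₀` in some direction `w - y₀` with `w ∈ Y`. Following these directions moves `G` along
the straight line from `G y₀` to `0`, and since the point reached at time `t` has the form
`y₀ + t • (u - y₀)` with `u ∈ Y`, the path never leaves the convex set `Y`. A maximality argument
on approximate paths replaces the differential equation, so no fixed-point theorem is needed.
The zero is unique because a mean value matrix `M` has `M A₂` invertible; hence it depends
continuously on `x`, and the implicit function theorem makes it as smooth as `F`.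
-/

section StraightLinePath

open Filter Topology

variable {E F : Type*} [NormedAddCommGroup E] [NormedSpace ℝ E]
  [NormedAddCommGroup F] [NormedSpace ℝ F]
  {Y : Set E} {G : E → F} {y₀ : E} {c : F}

theorem exists_gt_norm_sub_add_smul_le_of_hasLineDerivWithinAt (hYc : Convex ℝ Y) (hy₀ : y₀ ∈ Y)
    {u w : E} (hu : u ∈ Y) (hw : w ∈ Y) {t ε : ℝ} (ht₀ : 0 ≤ t) (ht₁ : t < 1) (hε : 0 < ε)
    (hG : HasLineDerivWithinAt ℝ G c Y (y₀ + t • (u - y₀)) (w - y₀))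
    (ht : ‖G (y₀ + t • (u - y₀)) - (G y₀ + t • c)‖ ≤ ε * t) :
    ∃ t' ∈ Ioc t 1, ∃ u' ∈ Y, ‖G (y₀ + t' • (u' - y₀)) - (G y₀ + t' • c)‖ ≤ ε * t' := by
  set y := y₀ + t • (u - y₀) with hy
  have path_eq : ∀ s, 0 ≤ s → ∃ u' ∈ Y, y + s • (w - y₀) = y₀ + (t + s) • (u' - y₀) := by
    intro s hs
    obtain ⟨u', hu', h⟩ := hYc.exists_mem_add_smul_eq hu hw ht₀ hs
    refine ⟨u', hu', ?_⟩
    rw [smul_sub (t + s), h, hy]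
    module
  have path_mem : Ioo 0 (1 - t) ⊆ (fun s : ℝ => y + s • (w - y₀)) ⁻¹' Y := by
    intro s hs
    obtain ⟨u', hu', h⟩ := path_eq s hs.1.le
    rw [mem_preimage, h]
    exact hYc.add_smul_sub_mem hy₀ hu' ⟨by linarith [hs.1], by linarith [hs.2]⟩
  have first_order : ∀ᶠ s : ℝ in 𝓝[Ioo 0 (1 - t)] 0,
      ‖G (y + s • (w - y₀)) - G y - s • c‖ ≤ ε * s := by
    have h := (hasDerivWithinAt_iff_isLittleO.1 (HasDerivWithinAt.mono hG path_mem)).def hε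
    filter_upwards [h, self_mem_nhdsWithin] with s hs hs_mem
    simpa [abs_of_pos hs_mem.1] using hs
  have : (𝓝[Ioo 0 (1 - t)] (0 : ℝ)).NeBot := left_nhdsWithin_Ioo_neBot (by linarith)
  obtain ⟨s, hs, hs₀, hs₁⟩ := (first_order.and self_mem_nhdsWithin).exists
  obtain ⟨u', hu', h⟩ := path_eq s hs₀.le
  refine ⟨t + s, ⟨by linarith, by linarith⟩, u', hu', ?_⟩
  calc ‖G (y₀ + (t + s) • (u' - y₀)) - (G y₀ + (t + s) • c)‖
      = ‖(G (y + s • (w - y₀)) - G y - s • c) + (G y - (G y₀ + t • c))‖ := by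
        rw [h]; congr 1; module
    _ ≤ ε * s + ε * t := norm_add_le_of_le hs ht
    _ = ε * (t + s) := by ring

theorem exists_norm_sub_add_le_of_hasLineDerivWithinAt (hY : IsCompact Y) (hYc : Convex ℝ Y)
    (hG : ContinuousOn G Y) (hy₀ : y₀ ∈ Y)
    (hc : ∀ y ∈ Y, ∃ w ∈ Y, HasLineDerivWithinAt ℝ G c Y y (w - y₀)) {ε : ℝ} (hε : 0 < ε) :
    ∃ y ∈ Y, ‖G y - (G y₀ + c)‖ ≤ ε := by
  let pt : ℝ × E → E := fun p => y₀ + p.1 • (p.2 - y₀)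
  let defect : ℝ × E → ℝ := fun p => ‖G (pt p) - (G y₀ + p.1 • c)‖ - ε * p.1
  have pt_mem : MapsTo pt (Icc 0 1 ×ˢ Y) Y := fun p hp => hYc.add_smul_sub_mem hy₀ hp.2 hp.1
  have defect_cont : ContinuousOn defect (Icc 0 1 ×ˢ Y) := by
    have : ContinuousOn (fun p => G (pt p)) (Icc 0 1 ×ˢ Y) := hG.comp (by fun_prop) pt_mem
    fun_prop
  have box_compact : IsCompact (Icc (0 : ℝ) 1 ×ˢ Y) := isCompact_Icc.prod hY
  have adm_compact : IsCompact ((Icc (0 : ℝ) 1 ×ˢ Y) ∩ defect ⁻¹' Iic 0) :=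
    box_compact.of_isClosed_subset
      (defect_cont.preimage_isClosed_of_isClosed box_compact.isClosed isClosed_Iic)
      inter_subset_left
  obtain ⟨⟨t, u⟩, ⟨⟨⟨ht₀, ht₁⟩, hu⟩, htu⟩, hmax⟩ := adm_compact.exists_isMaxOn
    ⟨(0, y₀), by simp [hy₀, defect, pt]⟩ continuous_fst.continuousOn
  have t_eq_one : t = 1 := by
    refine ht₁.eq_of_not_lt fun ht₁ => ?_
    obtain ⟨w, hw, hGw⟩ := hc _ (pt_mem ⟨⟨ht₀, ht₁.le⟩, hu⟩)
    obtain ⟨t', ⟨htt', ht'₁⟩, u', hu', hle⟩ :=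
      exists_gt_norm_sub_add_smul_le_of_hasLineDerivWithinAt hYc hy₀ hu hw ht₀ ht₁ hε hGw
        (sub_nonpos.1 htu)
    have adm : (t', u') ∈ (Icc (0 : ℝ) 1 ×ˢ Y) ∩ defect ⁻¹' Iic 0 :=
      ⟨⟨⟨ht₀.trans htt'.le, ht'₁⟩, hu'⟩, sub_nonpos.2 hle⟩
    exact htt'.not_ge (hmax adm)
  subst t_eq_one
  exact ⟨pt (1, u), pt_mem ⟨⟨ht₀, ht₁⟩, hu⟩, by simpa [defect] using htu⟩

theorem exists_eq_add_of_hasLineDerivWithinAt (hY : IsCompact Y) (hYc : Convex ℝ Y)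
    (hG : ContinuousOn G Y) (hy₀ : y₀ ∈ Y)
    (hc : ∀ y ∈ Y, ∃ w ∈ Y, HasLineDerivWithinAt ℝ G c Y y (w - y₀)) :
    ∃ y ∈ Y, G y = G y₀ + c := by
  obtain ⟨y, hy, hmin⟩ :=
    hY.exists_isMinOn ⟨y₀, hy₀⟩ (f := fun y => ‖G y - (G y₀ + c)‖) (by fun_prop)
  have norm_le : ∀ ε > 0, ‖G y - (G y₀ + c)‖ ≤ ε := fun ε hε => by
    obtain ⟨y', hy', hle⟩ := exists_norm_sub_add_le_of_hasLineDerivWithinAt hY hYc hG hy₀ hc hε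
    exact (hmin hy').trans hle
  exact ⟨y, hy, sub_eq_zero.1 (norm_le_zero_iff.1 (le_of_forall_gt_imp_ge_of_dense norm_le))⟩

end StraightLinePath

section ImplicitFunction

open Filter Topology

theorem continuousOn_of_forall_apply_eq_iff {α β γ : Type*} [TopologicalSpace α]
    [TopologicalSpace β] [TopologicalSpace γ] [T2Space γ] {X : Set α} {Y : Set β}
    {f : α × β → γ} {c : γ} {q : α → β} (hY : IsCompact Y) (hf : ContinuousOn f (X ×ˢ Y))
    (hqY : MapsTo q X Y) (hq : ∀ x ∈ X, ∀ y ∈ Y, f (x, y) = c ↔ y = q x) :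
    ContinuousOn q X := by
  intro x hx
  refine hY.tendsto_nhds_of_unique_mapClusterPt
    (eventually_mem_nhdsWithin.mono fun x' hx' => hqY hx') fun y hy hcluster => ?_
  obtain ⟨U, hU, hUy⟩ := mapClusterPt_iff_ultrafilter.1 hcluster
  have hUX : ∀ᶠ x' in (U : Filter α), x' ∈ X := hU self_mem_nhdsWithin
  have graph_tendsto : Tendsto (fun x' => (x', q x')) U (𝓝[X ×ˢ Y] (x, y)) :=
    tendsto_nhdsWithin_iff.2 ⟨(tendsto_id'.2 (hU.trans nhdsWithin_le_nhds)).prodMk_nhds hUy,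
      hUX.mono fun x' hx' => ⟨hx', hqY hx'⟩⟩
  have value_eq : ∀ᶠ x' in (U : Filter α), c = f (x', q x') :=
    hUX.mono fun x' hx' => ((hq x' hx' _ (hqY hx')).2 rfl).symm
  exact (hq x hx y hy).1 (tendsto_nhds_unique ((hf _ ⟨hx, hy⟩).tendsto.comp graph_tendsto)
    (tendsto_const_nhds.congr' value_eq))

theorem contDiffOn_of_forall_apply_eq {𝕜 E₁ E₂ E₃ : Type*} [RCLike 𝕜]
    [NormedAddCommGroup E₁] [NormedSpace 𝕜 E₁] [CompleteSpace E₁]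
    [NormedAddCommGroup E₂] [NormedSpace 𝕜 E₂] [CompleteSpace E₂]
    [NormedAddCommGroup E₃] [NormedSpace 𝕜 E₃] [CompleteSpace E₃]
    {n : WithTop ℕ∞} (hn : n ≠ 0) {X : Set E₁} {f : E₁ × E₂ → E₃} {c : E₃} {q : E₁ → E₂}
    (hq : ContinuousOn q X) (hfq : ∀ x ∈ X, f (x, q x) = c)
    (hf : ∀ x ∈ X, ContDiffAt 𝕜 n f (x, q x))
    (hf' : ∀ x ∈ X, (fderiv 𝕜 f (x, q x) ∘L .inr 𝕜 E₁ E₂).IsInvertible) :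
    ContDiffOn 𝕜 n q X := by
  intro x hx
  have graph_tendsto : Tendsto (fun x' => (x', q x')) (𝓝[X] x) (𝓝 (x, q x)) :=
    continuousWithinAt_id.prodMk (hq x hx)
  refine ((hf x hx).contDiffAt_implicitFunction hn (hf' x hx)).contDiffWithinAt
    |>.congr_of_eventuallyEq_of_mem ?_ hx
  filter_upwards [graph_tendsto.eventually
    ((hf x hx).eventually_apply_eq_iff_implicitFunction hn (hf' x hx)), self_mem_nhdsWithin]
    with x' hiff hx'
  exact (hiff.1 ((hfq x' hx').trans (hfq x hx).symm)).symm

end ImplicitFunction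

theorem isInvertible_toContinuousLinearMap_mulVecLin {κ : Type*} [Fintype κ] [DecidableEq κ]
    {M : Matrix κ κ ℝ} (hM : IsUnit M) :
    (LinearMap.toContinuousLinearMap M.mulVecLin).IsInvertible := by
  have hdet := (isUnit_iff_isUnit_det M).1 hM
  refine .of_inverse (g := LinearMap.toContinuousLinearMap M⁻¹.mulVecLin) ?_ ?_ <;>
    ext1 v <;> simp [mul_nonsing_inv M hdet, nonsing_inv_mul M hdet]

section IntervalHull

variable {κ μ : Type*} [Fintype μ] [DecidableEq μ]

/-- The interval hull `[DF(S)]`: the matrices each of whose entries lies between the infimum and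
the supremum over `S` of the corresponding partial derivative of `F`. The bounds are real `sInf`
and `sSup`, so the definition is meaningful only when the partial derivatives are bounded on a
nonempty `S`. -/
def intervalHull (F : (μ → ℝ) → κ → ℝ) (S : Set (μ → ℝ)) : Set (Matrix κ μ ℝ) :=
  {M | ∀ i j, M i j ∈ Icc (sInf ((fun z => fderiv ℝ F z (Pi.single j 1) i) '' S))
    (sSup ((fun z => fderiv ℝ F z (Pi.single j 1) i) '' S))}

/-- The Jacobian matrix `DF(z)`. -/
noncomputable def jacobian (F : (μ → ℝ) → κ → ℝ) (z : μ → ℝ) : Matrix κ μ ℝ :=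
  LinearMap.toMatrix' (fderiv ℝ F z : (μ → ℝ) →ₗ[ℝ] κ → ℝ)

variable {F : (μ → ℝ) → κ → ℝ} {S : Set (μ → ℝ)}

theorem jacobian_mulVec (z v : μ → ℝ) : jacobian F z *ᵥ v = fderiv ℝ F z v :=
  LinearMap.toMatrix'_mulVec _ v

theorem of_jacobian_row_mem_intervalHull [Finite κ] (hS : IsCompact S)
    (hF' : ContinuousOn (fderiv ℝ F) S) {ξ : κ → μ → ℝ} (hξ : ∀ i, ξ i ∈ S) :
    (Matrix.of fun i => jacobian F (ξ i) i) ∈ intervalHull F S := by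
  cases nonempty_fintype κ
  intro i j
  have partial_cont : ContinuousOn (fun z => fderiv ℝ F z (Pi.single j 1) i) S :=
    (continuous_apply i).comp_continuousOn (hF'.clm_apply continuousOn_const)
  have image_compact := hS.image_of_continuousOn partial_cont
  exact ⟨csInf_le image_compact.bddBelow ⟨_, hξ i, rfl⟩,
    le_csSup image_compact.bddAbove ⟨_, hξ i, rfl⟩⟩

theorem jacobian_mem_intervalHull [Finite κ] (hS : IsCompact S)
    (hF' : ContinuousOn (fderiv ℝ F) S) {z : μ → ℝ} (hz : z ∈ S) :
    jacobian F z ∈ intervalHull F S :=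
  of_jacobian_row_mem_intervalHull hS hF' fun _ => hz

theorem exists_mem_intervalHull_sub_eq_mulVec [Finite κ] (hS : IsCompact S) (hSc : Convex ℝ S)
    (hF : ∀ z ∈ S, DifferentiableAt ℝ F z) (hF' : ContinuousOn (fderiv ℝ F) S)
    {z z' : μ → ℝ} (hz : z ∈ S) (hz' : z' ∈ S) :
    ∃ M ∈ intervalHull F S, F z' - F z = M *ᵥ (z' - z) := by
  cases nonempty_fintype κ
  have mean_value : ∀ i, ∃ ξ ∈ S, F z' i - F z i = fderiv ℝ F ξ (z' - z) i := by
    intro i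
    obtain ⟨ξ, hξ, h⟩ := domain_mvt (f := fun x => F x i)
      (f' := fun x => ContinuousLinearMap.proj i ∘L fderiv ℝ F x)
      (fun x hx => (hasFDerivAt_pi'.1 (hF x hx).hasFDerivAt i).hasFDerivWithinAt) hSc hz hz'
    exact ⟨ξ, hSc.segment_subset hz hz' hξ, h⟩
  choose ξ hξ hF_eq using mean_value
  refine ⟨_, of_jacobian_row_mem_intervalHull hS hF' hξ, funext fun i => ?_⟩
  exact (hF_eq i).trans (congrFun (jacobian_mulVec (ξ i) (z' - z)) i).symm

theorem eq_zero_of_apply_add_mulVec_eq [Fintype κ] [DecidableEq κ]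
    (hS : IsCompact S) (hSc : Convex ℝ S)
    (hF : ∀ z ∈ S, DifferentiableAt ℝ F z) (hF' : ContinuousOn (fderiv ℝ F) S)
    {A : Matrix μ κ ℝ} (hinv : ∀ M ∈ intervalHull F S, IsUnit (M * A)) {z : μ → ℝ} {v : κ → ℝ}
    (hz : z ∈ S) (hzv : z + A *ᵥ v ∈ S) (h : F (z + A *ᵥ v) = F z) : v = 0 := by
  obtain ⟨M, hM, hsub⟩ := exists_mem_intervalHull_sub_eq_mulVec hS hSc hF hF' hz hzv
  rw [h, sub_self, add_sub_cancel_left, mulVec_mulVec] at hsub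
  exact mulVec_injective_of_isUnit (hinv M hM) (hsub.symm.trans (mulVec_zero _).symm)

theorem exists_apply_add_mulVec_eq_zero [Fintype κ] [DecidableEq κ] (hS : IsCompact S)
    (hF : ∀ z ∈ S, DifferentiableAt ℝ F z) (hF' : ContinuousOn (fderiv ℝ F) S)
    {A : Matrix μ κ ℝ} (hinv : ∀ M ∈ intervalHull F S, IsUnit (M * A)) {z : μ → ℝ}
    {Y : Set (κ → ℝ)} (hY : IsCompact Y) (hYc : Convex ℝ Y) (hYS : ∀ y ∈ Y, z + A *ᵥ y ∈ S)
    {y₀ : κ → ℝ} (hy₀ : y₀ ∈ Y)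
    (hNewton : ∀ M ∈ intervalHull F S, y₀ - (M * A)⁻¹ *ᵥ F (z + A *ᵥ y₀) ∈ Y) :
    ∃ y ∈ Y, F (z + A *ᵥ y) = 0 := by
  let G : (κ → ℝ) → κ → ℝ := fun y => F (z + A *ᵥ y)
  have hG : ∀ y ∈ Y, HasFDerivAt G
      (fderiv ℝ F (z + A *ᵥ y) ∘L LinearMap.toContinuousLinearMap A.mulVecLin) y := fun y hy =>
    (hF _ (hYS y hy)).hasFDerivAt.comp y
      ((LinearMap.toContinuousLinearMap A.mulVecLin).hasFDerivAt.const_add z)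
  have newton_direction : ∀ y ∈ Y, ∃ w ∈ Y, HasLineDerivWithinAt ℝ G (-G y₀) Y y (w - y₀) := by
    intro y hy
    have hJ := jacobian_mem_intervalHull hS hF' (hYS y hy)
    refine ⟨_, hNewton _ hJ, ?_⟩
    have hdet := (isUnit_iff_isUnit_det _).1 (hinv _ hJ)
    have deriv_eq : (fderiv ℝ F (z + A *ᵥ y) ∘L LinearMap.toContinuousLinearMap A.mulVecLin)
        (y₀ - (jacobian F (z + A *ᵥ y) * A)⁻¹ *ᵥ G y₀ - y₀) = -G y₀ := by
      simp [← jacobian_mulVec, mulVec_neg, ← Matrix.mul_assoc, mul_nonsing_inv _ hdet]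
    exact deriv_eq ▸ ((hG y hy).hasLineDerivAt _).hasLineDerivWithinAt Y
  obtain ⟨y, hy, h⟩ := exists_eq_add_of_hasLineDerivWithinAt hY hYc
    (fun y hy => (hG y hy).continuousAt.continuousWithinAt) hy₀ newton_direction
  exact ⟨y, hy, h.trans (add_neg_cancel _)⟩

end IntervalHull

section AdaptedCoordinates

variable {ι κ μ : Type*} [Fintype ι] [Fintype κ]

/-- The adapted coordinates `(x, y) ↦ p* + A₁ x + A₂ y`, bundled as a continuous affine map. -/
noncomputable def adaptedCoord (pstar : μ → ℝ) (A₁ : Matrix μ ι ℝ) (A₂ : Matrix μ κ ℝ) :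
    (ι → ℝ) × (κ → ℝ) →ᴬ[ℝ] (μ → ℝ) :=
  .const ℝ _ pstar +
    (LinearMap.toContinuousLinearMap A₁.mulVecLin ∘L .fst ℝ _ _).toContinuousAffineMap +
    (LinearMap.toContinuousLinearMap A₂.mulVecLin ∘L .snd ℝ _ _).toContinuousAffineMap

variable {pstar : μ → ℝ} {A₁ : Matrix μ ι ℝ} {A₂ : Matrix μ κ ℝ}

theorem adaptedCoord_apply (x : ι → ℝ) (y : κ → ℝ) :
    adaptedCoord pstar A₁ A₂ (x, y) = pstar + A₁ *ᵥ x + A₂ *ᵥ y :=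
  rfl

theorem adaptedCoord_sub_adaptedCoord_left (x x' : ι → ℝ) (y : κ → ℝ) :
    adaptedCoord pstar A₁ A₂ (x', y) - adaptedCoord pstar A₁ A₂ (x, y) = A₁ *ᵥ (x' - x) := by
  simp only [adaptedCoord_apply, mulVec_sub]
  abel

theorem adaptedCoord_add_mulVec_sub (x : ι → ℝ) (y y' : κ → ℝ) :
    adaptedCoord pstar A₁ A₂ (x, y) + A₂ *ᵥ (y' - y) = adaptedCoord pstar A₁ A₂ (x, y') := by
  simp only [adaptedCoord_apply, mulVec_sub]
  abel

theorem isInvertible_fderiv_comp_adaptedCoord [Fintype μ] [DecidableEq μ] [DecidableEq κ]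
    {F : (μ → ℝ) → κ → ℝ} {p : (ι → ℝ) × (κ → ℝ)}
    (hF : DifferentiableAt ℝ F (adaptedCoord pstar A₁ A₂ p))
    (hinv : IsUnit (jacobian F (adaptedCoord pstar A₁ A₂ p) * A₂)) :
    (fderiv ℝ (F ∘ adaptedCoord pstar A₁ A₂) p ∘L .inr ℝ _ _).IsInvertible := by
  have fderiv_eq : fderiv ℝ (F ∘ adaptedCoord pstar A₁ A₂) p ∘L .inr ℝ _ _ =
      LinearMap.toContinuousLinearMap
        (jacobian F (adaptedCoord pstar A₁ A₂ p) * A₂).mulVecLin := by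
    ext1 v
    rw [fderiv_comp _ hF (adaptedCoord pstar A₁ A₂).differentiableAt, ContinuousAffineMap.fderiv]
    simp [adaptedCoord, jacobian_mulVec, -mulVec_mulVec, mulVecLin_mul]
  exact fderiv_eq ▸ isInvertible_toContinuousLinearMap_mulVecLin hinv

theorem image_adaptedCoord_prod (X : Set (ι → ℝ)) (Y : Set (κ → ℝ)) :
    adaptedCoord pstar A₁ A₂ '' X ×ˢ Y =
      {z | ∃ x ∈ X, ∃ y ∈ Y, z = pstar + A₁ *ᵥ x + A₂ *ᵥ y} := by
  ext z
  simp [adaptedCoord_apply, eq_comm, and_assoc]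

theorem image_adaptedCoord_prod_singleton (X : Set (ι → ℝ)) (y : κ → ℝ) :
    adaptedCoord pstar A₁ A₂ '' X ×ˢ {y} = {z | ∃ x ∈ X, z = pstar + A₁ *ᵥ x + A₂ *ᵥ y} := by
  simp [image_adaptedCoord_prod]

variable [Fintype μ] [DecidableEq μ] [DecidableEq κ]

theorem directed_interval_newton_general {n : WithTop ℕ∞} (hn : n ≠ 0)
    {F : (μ → ℝ) → κ → ℝ} (hF : ContDiff ℝ n F)
    {X : Set (ι → ℝ)} (hX : IsCompact X) (hXc : Convex ℝ X)
    {Y : Set (κ → ℝ)} (hY : IsCompact Y) (hYc : Convex ℝ Y)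
    {x₀ : ι → ℝ} (hx₀ : x₀ ∈ X) {y₀ : κ → ℝ} (hy₀ : y₀ ∈ Y)
    (hinv : ∀ M ∈ intervalHull F (adaptedCoord pstar A₁ A₂ '' X ×ˢ Y), IsUnit (M * A₂))
    (hNewton : ∀ x ∈ X, ∀ M ∈ intervalHull F (adaptedCoord pstar A₁ A₂ '' X ×ˢ Y),
      ∀ M' ∈ intervalHull F (adaptedCoord pstar A₁ A₂ '' X ×ˢ {y₀}),
      y₀ - (M * A₂)⁻¹ *ᵥ (F (adaptedCoord pstar A₁ A₂ (x₀, y₀)) + (M' * A₁) *ᵥ (x - x₀)) ∈ Y) :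
    ∃ q : (ι → ℝ) → κ → ℝ, MapsTo q X Y ∧
      (∀ x ∈ X, ∀ y ∈ Y, F (adaptedCoord pstar A₁ A₂ (x, y)) = 0 ↔ y = q x) ∧
      ContDiffOn ℝ n q X := by
  set P := adaptedCoord pstar A₁ A₂
  have hS : IsCompact (P '' X ×ˢ Y) := (hX.prod hY).image P.continuous
  have hSc : Convex ℝ (P '' X ×ˢ Y) := (hXc.prod hYc).affine_image P.toAffineMap
  have hS₀ : IsCompact (P '' X ×ˢ {y₀}) := (hX.prod isCompact_singleton).image P.continuous
  have hS₀c : Convex ℝ (P '' X ×ˢ {y₀}) :=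
    (hXc.prod (convex_singleton y₀)).affine_image P.toAffineMap
  have hFd : Differentiable ℝ F := hF.differentiable hn
  have hF' : Continuous (fderiv ℝ F) := hF.continuous_fderiv hn
  have P_mem : ∀ x ∈ X, ∀ y ∈ Y, P (x, y) ∈ P '' X ×ˢ Y := fun x hx y hy =>
    mem_image_of_mem P ⟨hx, hy⟩
  have exists_zero : ∀ x ∈ X, ∃ y ∈ Y, F (P (x, y)) = 0 := by
    intro x hx
    obtain ⟨M', hM', hsub⟩ := exists_mem_intervalHull_sub_eq_mulVec hS₀ hS₀c
      (fun z _ => hFd z) hF'.continuousOn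
      (mem_image_of_mem P (mk_mem_prod hx₀ rfl)) (mem_image_of_mem P (mk_mem_prod hx rfl))
    have P_sub : P (x, y₀) - P (x₀, y₀) = A₁ *ᵥ (x - x₀) :=
      adaptedCoord_sub_adaptedCoord_left x₀ x y₀
    have value_eq : F (P (x, y₀)) = F (P (x₀, y₀)) + (M' * A₁) *ᵥ (x - x₀) := by
      rw [← mulVec_mulVec, ← P_sub, ← hsub, add_sub_cancel]
    exact exists_apply_add_mulVec_eq_zero hS (fun z _ => hFd z) hF'.continuousOn hinv hY hYc
      (P_mem x hx) hy₀ fun M hM => value_eq.symm ▸ hNewton x hx M hM M' hM'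
  choose! q hqY hq₀ using exists_zero
  have zero_iff : ∀ x ∈ X, ∀ y ∈ Y, F (P (x, y)) = 0 ↔ y = q x := by
    refine fun x hx y hy => ⟨fun h => ?_, fun h => h ▸ hq₀ x hx⟩
    have hP : P (x, q x) + A₂ *ᵥ (y - q x) = P (x, y) := adaptedCoord_add_mulVec_sub x (q x) y
    exact sub_eq_zero.1 (eq_zero_of_apply_add_mulVec_eq hS hSc (fun z _ => hFd z)
      hF'.continuousOn hinv (P_mem x hx _ (hqY x hx)) (hP.symm ▸ P_mem x hx y hy)
      (by rw [hP, h, hq₀ x hx]))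
  refine ⟨q, hqY, zero_iff, contDiffOn_of_forall_apply_eq (f := F ∘ P) hn ?_ hq₀
    (fun x _ => (hF.comp P.contDiff).contDiffAt) fun x hx => ?_⟩
  · exact continuousOn_of_forall_apply_eq_iff hY
      (hF.continuous.comp P.continuous).continuousOn hqY zero_iff
  · exact isInvertible_fderiv_comp_adaptedCoord (hFd _)
      (hinv _ (jacobian_mem_intervalHull hS hF'.continuousOn (P_mem x hx _ (hqY x hx))))

end AdaptedCoordinates

/-- Directed interval Newton theorem (Theorem 4.6 of the paper).
In the adapted coordinates `p* + A₁x + A₂y`, if every matrix `M` in the interval hull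
`[DF(S_{X,Y})]` has `M A₂` invertible and the directed Newton image lies in `Y`, then
there is a map `q : X → Y`, as smooth as `F` (in particular C¹ on `X`), with
`F(p* + A₁ x + A₂ q(x)) = 0` for all `x ∈ X`. -/
theorem directed_interval_newton
    {m k : ℕ} (hmk : k < m)
    (F : (Fin m → ℝ) → (Fin k → ℝ)) (hF : ContDiff ℝ 1 F)
    (pstar : Fin m → ℝ)
    (A1 : Matrix (Fin m) (Fin (m - k)) ℝ) (A2 : Matrix (Fin m) (Fin k) ℝ)
    (a b : Fin (m - k) → ℝ) (c d : Fin k → ℝ)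
    (X : Set (Fin (m - k) → ℝ)) (hX : X = univ.pi fun i => Icc (a i) (b i))
    (Y : Set (Fin k → ℝ)) (hY : Y = univ.pi fun i => Icc (c i) (d i))
    (x0 : Fin (m - k) → ℝ) (hx0 : x0 ∈ X) (y0 : Fin k → ℝ) (hy0 : y0 ∈ Y)
    (SXy0 SXY : Set (Fin m → ℝ))
    (hSXy0 : SXy0 = {z | ∃ x ∈ X, z = pstar + A1 *ᵥ x + A2 *ᵥ y0})
    (hSXY : SXY = {z | ∃ x ∈ X, ∃ y ∈ Y, z = pstar + A1 *ᵥ x + A2 *ᵥ y})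
    (hullXY hullXy0 : Set (Matrix (Fin k) (Fin m) ℝ))
    (hhullXY : hullXY = {M | ∀ i j, M i j ∈ Icc
      (sInf ((fun z => fderiv ℝ F z (Pi.single j 1) i) '' SXY))
      (sSup ((fun z => fderiv ℝ F z (Pi.single j 1) i) '' SXY))})
    (hhullXy0 : hullXy0 = {M | ∀ i j, M i j ∈ Icc
      (sInf ((fun z => fderiv ℝ F z (Pi.single j 1) i) '' SXy0))
      (sSup ((fun z => fderiv ℝ F z (Pi.single j 1) i) '' SXy0))})
    (hinv : ∀ M ∈ hullXY, IsUnit (M * A2))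
    (hNewton : ∀ x ∈ X, ∀ M ∈ hullXY, ∀ M' ∈ hullXy0,
      y0 - (M * A2)⁻¹ *ᵥ (F (pstar + A1 *ᵥ x0 + A2 *ᵥ y0) + (M' * A1) *ᵥ (x - x0)) ∈ Y) :
    ∃ q : (Fin (m - k) → ℝ) → (Fin k → ℝ),
      (∀ x ∈ X, q x ∈ Y ∧ F (pstar + A1 *ᵥ x + A2 *ᵥ q x) = 0) ∧
      ContDiffOn ℝ 1 q X := by
  subst hX hY hSXy0 hSXY hhullXY hhullXy0
  simp only [pi_univ_Icc, ← image_adaptedCoord_prod, ← image_adaptedCoord_prod_singleton] at *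
  obtain ⟨q, hqY, hq, hq_smooth⟩ := directed_interval_newton_general one_ne_zero hF
    isCompact_Icc (convex_Icc a b) isCompact_Icc (convex_Icc c d) hx0 hy0 hinv hNewton
  exact ⟨q, fun x hx => ⟨hqY hx, (hq x hx _ (hqY hx)).2 rfl⟩, hq_smooth⟩
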